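/- For a strictly positive integer m, let A(m) denote the number of subsets S ⊆ {1,…,m} with ∑_{j∈S} j = ⌊m(m+1)/4⌋. Then A(m) = √(6/π) · 2^m / m^{3/2} · (1 + o(1)) as m → ∞; equivalently, A(m) · m^{3/2} / 2^m tends to √(6/π) as m → ∞. -/

import Mathlib

/-!
Let `ε₁, …, εₘ` be independent fair signs. The sum of a random subset of `{1, …, m}` is distributed
as `(m(m+1)/2 - ∑ j εⱼ) / 2`, and `∑ j εⱼ` has characteristic function `∏ⱼ cos (j t)`, so Fourier
inversion on `[-π/2, π/2]` expresses the number of subsets with sum `n` as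
`2ᵐ π⁻¹ ∫ (∏ⱼ cos (j t)) cos ((2n - m(m+1)/2) t) dt`. After the substitution `t = s / m^{3/2}` the
product tends to `exp (-s²/6)`, because `∑ (j t)² → s²/3` and `∑ (j t)⁴ → 0`.

The integrand is dominated through `|∏ⱼ cos (j t)| ≤ exp (-½ ∑ⱼ sin² (j t))`: the exponent is at
least of order `s²` when `m |t| ≤ π/2` (Jordan's inequality), and at least `m/8` otherwise (a closed
form for the sum of the squared sines).
-/

namespace SubsetSum

open Real Finset Filter Topology MeasureTheory

variable {ι : Type*}

lemma sum_powerset_cos (s : Finset ι) (f : ι → ℝ) (x : ℝ) :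
    ∑ A ∈ s.powerset, cos (x + ∑ i ∈ s, f i - 2 * ∑ i ∈ A, f i) =
      2 ^ #s * cos x * ∏ i ∈ s, cos (f i) := by
  classical
  induction s using Finset.induction_on generalizing x with
  | empty => simp
  | insert a s ha ih =>
    have cos_add_add_cos_sub : cos (x + f a) + cos (x - f a) = 2 * cos x * cos (f a) := by
      rw [two_mul_cos_mul_cos, add_comm]
    have h_notMem : ∑ A ∈ s.powerset, cos (x + ∑ i ∈ insert a s, f i - 2 * ∑ i ∈ A, f i) =
        2 ^ #s * cos (x + f a) * ∏ i ∈ s, cos (f i) := by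
      simp_rw [← ih, sum_insert ha, add_assoc]
    have h_mem : ∑ A ∈ s.powerset, cos (x + ∑ i ∈ insert a s, f i - 2 * ∑ i ∈ insert a A, f i) =
        2 ^ #s * cos (x - f a) * ∏ i ∈ s, cos (f i) := by
      rw [← ih]
      refine sum_congr rfl fun A hA => ?_
      rw [sum_insert ha, sum_insert (notMem_mono (mem_powerset.1 hA) ha)]
      ring_nf
    rw [sum_powerset_insert ha, h_notMem, h_mem, ← add_mul, ← mul_add, cos_add_add_cos_sub,
      prod_insert ha, card_insert_of_notMem ha]
    ring

lemma integral_cos_two_mul_int (k : ℤ) :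
    ∫ t in -(π / 2)..π / 2, cos (2 * k * t) = if k = 0 then π else 0 := by
  split_ifs with hk
  · simp [hk]
  · have hk' : (2 * k : ℝ) ≠ 0 := by simpa using hk
    have hsin : sin (2 * k * (π / 2)) = 0 := by
      rw [← sin_int_mul_pi k]
      ring_nf
    rw [intervalIntegral.integral_comp_mul_left _ hk', integral_cos, mul_neg, sin_neg, hsin]
    simp

theorem card_filter_sum_eq_mul_pi (s : Finset ι) (w : ι → ℤ) (n : ℤ) :
    #{A ∈ s.powerset | ∑ i ∈ A, w i = n} * π =
      2 ^ #s * ∫ t in -(π / 2)..π / 2,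
        (∏ i ∈ s, cos (w i * t)) * cos ((2 * n - ∑ i ∈ s, (w i : ℝ)) * t) := by
  have sum_cos (t : ℝ) : ∑ A ∈ s.powerset, cos (2 * (n - ∑ i ∈ A, w i : ℤ) * t) =
      2 ^ #s * ((∏ i ∈ s, cos (w i * t)) * cos ((2 * n - ∑ i ∈ s, (w i : ℝ)) * t)) := by
    rw [mul_comm (∏ i ∈ s, _), ← mul_assoc, ← sum_powerset_cos]
    refine sum_congr rfl fun A _ => congrArg cos ?_
    push_cast
    simp_rw [← sum_mul]
    ring
  rw [← intervalIntegral.integral_const_mul]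
  simp_rw [← sum_cos]
  rw [intervalIntegral.integral_finsetSum
    fun A _ => Continuous.intervalIntegrable (by fun_prop) _ _]
  simp_rw [integral_cos_two_mul_int, sub_eq_zero, eq_comm (a := n)]
  rw [← sum_filter, sum_const, nsmul_eq_mul]

lemma norm_prod_sub_prod_le {R : Type*} [NormedCommRing R] [NormOneClass R] (s : Finset ι)
    {f g : ι → R} (hf : ∀ i ∈ s, ‖f i‖ ≤ 1) (hg : ∀ i ∈ s, ‖g i‖ ≤ 1) :
    ‖∏ i ∈ s, f i - ∏ i ∈ s, g i‖ ≤ ∑ i ∈ s, ‖f i - g i‖ := by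
  classical
  induction s using Finset.induction_on with
  | empty => simp
  | insert a s ha ih =>
    rw [forall_mem_insert] at hf hg
    have hprod : ‖∏ i ∈ s, g i‖ ≤ 1 :=
      (s.norm_prod_le g).trans (prod_le_one (fun _ _ => norm_nonneg _) hg.2)
    rw [prod_insert ha, prod_insert ha, sum_insert ha]
    calc ‖f a * ∏ i ∈ s, f i - g a * ∏ i ∈ s, g i‖
        = ‖(f a - g a) * ∏ i ∈ s, g i + f a * (∏ i ∈ s, f i - ∏ i ∈ s, g i)‖ := by ring_nf
      _ ≤ ‖f a - g a‖ * ‖∏ i ∈ s, g i‖ + ‖f a‖ * ‖∏ i ∈ s, f i - ∏ i ∈ s, g i‖ :=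
        (norm_add_le _ _).trans (add_le_add (norm_mul_le _ _) (norm_mul_le _ _))
      _ ≤ ‖f a - g a‖ * 1 + 1 * ∑ i ∈ s, ‖f i - g i‖ := by
        gcongr
        exacts [hf.1, ih hf.2 hg.2]
      _ = ‖f a - g a‖ + ∑ i ∈ s, ‖f i - g i‖ := by ring

lemma abs_cos_sub_exp_neg_sq_div_two_le (x : ℝ) : |cos x - exp (-(x ^ 2 / 2))| ≤ 2 * x ^ 4 := by
  have hcos : 1 - x ^ 2 / 2 ≤ cos x := one_sub_sq_div_two_le_cos
  have hexp : 1 - x ^ 2 / 2 ≤ exp (-(x ^ 2 / 2)) := one_sub_le_exp_neg _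
  rcases le_total |x| 1 with hx | hx
  · have hx2 : x ^ 2 ≤ 1 := (sq_le_one_iff_abs_le_one x).2 hx
    have hcos' := (abs_le.1 (cos_bound hx)).2
    have hexp' := (abs_le.1 (abs_exp_sub_one_sub_id_le (x := -(x ^ 2 / 2))
      (by rw [abs_neg, abs_of_nonneg (by positivity)]; linarith))).2
    rw [Even.pow_abs (by decide)] at hcos'
    rw [abs_le]
    constructor <;> linarith [show 0 ≤ x ^ 4 by positivity]
  · have hx4 : 1 ≤ x ^ 4 := by
      rw [← Even.pow_abs (by decide)]
      exact one_le_pow₀ hx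
    have := abs_le.1 (abs_cos_le_one x)
    have : exp (-(x ^ 2 / 2)) ≤ 1 := exp_le_one_iff.2 (by linarith [sq_nonneg x])
    have := exp_pos (-(x ^ 2 / 2))
    rw [abs_le]
    constructor <;> linarith

lemma abs_prod_cos_sub_exp_le (s : Finset ι) (f : ι → ℝ) :
    |∏ i ∈ s, cos (f i) - exp (-((∑ i ∈ s, f i ^ 2) / 2))| ≤ 2 * ∑ i ∈ s, f i ^ 4 := by
  rw [sum_div, ← sum_neg_distrib, exp_sum, mul_sum]
  refine (norm_prod_sub_prod_le s (f := fun i => cos (f i)) (g := fun i => exp (-(f i ^ 2 / 2)))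
    (fun i _ => abs_cos_le_one (f i)) fun i _ => ?_).trans
    (sum_le_sum fun i _ => abs_cos_sub_exp_neg_sq_div_two_le (f i))
  rw [norm_of_nonneg (exp_pos _).le, exp_le_one_iff]
  linarith [sq_nonneg (f i)]

lemma tendsto_prod_cos {α : Type*} {l : Filter α} {s : α → Finset ι} {f : α → ι → ℝ} {v : ℝ}
    (h_sq : Tendsto (fun a => ∑ i ∈ s a, f a i ^ 2) l (𝓝 v))
    (h_four : Tendsto (fun a => ∑ i ∈ s a, f a i ^ 4) l (𝓝 0)) :
    Tendsto (fun a => ∏ i ∈ s a, cos (f a i)) l (𝓝 (exp (-(v / 2)))) := by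
  have h_exp : Tendsto (fun a => exp (-((∑ i ∈ s a, f a i ^ 2) / 2))) l (𝓝 (exp (-(v / 2)))) :=
    (h_sq.div_const 2).neg.rexp
  have h_sub : Tendsto (fun a => ∏ i ∈ s a, cos (f a i) - exp (-((∑ i ∈ s a, f a i ^ 2) / 2))) l
      (𝓝 0) :=
    squeeze_zero_norm (fun a => abs_prod_cos_sub_exp_le (s a) (f a))
      (by simpa using h_four.const_mul 2)
  simpa using h_sub.add h_exp

lemma abs_prod_cos_le_exp_neg_sum_sin_sq (s : Finset ι) (f : ι → ℝ) :
    |∏ i ∈ s, cos (f i)| ≤ exp (-((∑ i ∈ s, sin (f i) ^ 2) / 2)) := by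
  refine abs_le_of_sq_le_sq ?_ (exp_pos _).le
  rw [← exp_nat_mul, ← prod_pow]
  calc ∏ i ∈ s, cos (f i) ^ 2
      ≤ ∏ i ∈ s, exp (-sin (f i) ^ 2) := by
        refine prod_le_prod (fun _ _ => sq_nonneg _) fun i _ => ?_
        rw [cos_sq']
        exact one_sub_le_exp_neg _
    _ = exp ((2 : ℕ) * -((∑ i ∈ s, sin (f i) ^ 2) / 2)) := by
        rw [← exp_sum, sum_neg_distrib]
        congr 1
        push_cast
        ring

lemma tendsto_intervalIntegral_of_dominated {α E : Type*} [NormedAddCommGroup E] [NormedSpace ℝ E]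
    {l : Filter α} [l.IsCountablyGenerated] {F : α → ℝ → E} {f : ℝ → E} {R : α → ℝ}
    (bound : ℝ → ℝ) (hR : Tendsto R l atTop) (hF : ∀ᶠ a in l, AEStronglyMeasurable (F a))
    (h_bound : ∀ᶠ a in l, ∀ᵐ x, |x| ≤ R a → ‖F a x‖ ≤ bound x) (h_int : Integrable bound)
    (h_lim : ∀ᵐ x, Tendsto (F · x) l (𝓝 (f x))) :
    Tendsto (fun a => ∫ x in -R a..R a, F a x) l (𝓝 (∫ x, f x)) := by
  have h_indicator : Tendsto (fun a => ∫ x, (Set.Ioc (-R a) (R a)).indicator (F a) x) l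
      (𝓝 (∫ x, f x)) := by
    refine tendsto_integral_filter_of_dominated_convergence (fun x => ‖bound x‖) ?_ ?_ h_int.norm ?_
    · filter_upwards [hF] with a ha using ha.indicator measurableSet_Ioc
    · filter_upwards [h_bound] with a ha
      filter_upwards [ha] with x h_le
      by_cases hx : x ∈ Set.Ioc (-R a) (R a)
      · rw [Set.indicator_of_mem hx]
        exact (h_le (abs_le.2 ⟨hx.1.le, hx.2⟩)).trans (le_norm_self _)
      · rw [Set.indicator_of_notMem hx, norm_zero]
        exact norm_nonneg _
    · filter_upwards [h_lim] with x hx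
      refine hx.congr' ?_
      filter_upwards [hR.eventually_gt_atTop |x|] with a ha
      have h_mem : x ∈ Set.Ioc (-R a) (R a) := ⟨(abs_lt.1 ha).1, (abs_lt.1 ha).2.le⟩
      exact (Set.indicator_of_mem h_mem _).symm
  refine h_indicator.congr' ?_
  filter_upwards [hR.eventually_ge_atTop 0] with a ha
  rw [integral_indicator measurableSet_Ioc, intervalIntegral.integral_of_le (by linarith)]

lemma integral_exp_neg_mul_sq_mul_cos {b : ℝ} (hb : 0 < b) (y : ℝ) :
    ∫ x : ℝ, exp (-b * x ^ 2) * cos (y * x) = √(π / b) * exp (-y ^ 2 / (4 * b)) := by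
  have h_integrand (x : ℝ) : exp (-b * x ^ 2) * cos (y * x) =
      (Complex.exp (-(b : ℂ) * x ^ 2 + Complex.I * y * x + 0)).re := by
    simp [Complex.exp_re, ← Complex.ofReal_pow]
  have h_int := integrable_cexp_quadratic (b := b) (by simpa using hb) (Complex.I * y) 0
  simp_rw [h_integrand]
  refine (integral_re h_int).trans ?_
  rw [integral_cexp_quadratic (by simpa using hb)]
  have h_value : (π / -(-(b : ℂ))) ^ (1 / 2 : ℂ) *
      Complex.exp (0 - (Complex.I * y) ^ 2 / (4 * -(b : ℂ))) =
      ((√(π / b) * exp (-y ^ 2 / (4 * b)) : ℝ) : ℂ) := by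
    rw [sqrt_eq_rpow, Complex.ofReal_mul, Complex.ofReal_cpow (by positivity), Complex.ofReal_exp]
    push_cast
    rw [mul_pow, Complex.I_sq, neg_neg]
    congr 2
    field
  rw [h_value]
  exact Complex.ofReal_re _

lemma sum_Icc_id (m : ℕ) : ∑ j ∈ Icc 1 m, (j : ℝ) = m * (m + 1) / 2 := by
  induction m with
  | zero => simp
  | succ m ih =>
    rw [sum_Icc_succ_top (by lia), ih]
    push_cast
    ring

lemma sum_Icc_sq (m : ℕ) : ∑ j ∈ Icc 1 m, (j : ℝ) ^ 2 = m * (m + 1) * (2 * m + 1) / 6 := by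
  induction m with
  | zero => simp
  | succ m ih =>
    rw [sum_Icc_succ_top (by lia), ih]
    push_cast
    ring

lemma four_mul_sin_mul_sum_sin_sq (m : ℕ) (t : ℝ) :
    4 * sin t * ∑ j ∈ Icc 1 m, sin (j * t) ^ 2 = (2 * m + 1) * sin t - sin ((2 * m + 1) * t) := by
  induction m with
  | zero => simp
  | succ m ih =>
    have h_sub : (2 * m + 1) * t = 2 * ((m + 1) * t) - t := by ring
    have h_add : (2 * (m + 1) + 1) * t = 2 * ((m + 1) * t) + t := by ring
    rw [sum_Icc_succ_top (by lia), mul_add, ih]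
    push_cast
    rw [h_sub, h_add, sin_sub, sin_add, cos_two_mul, cos_sq']
    ring

lemma sin_mul_abs_sq (x t : ℝ) : sin (x * |t|) ^ 2 = sin (x * t) ^ 2 := by
  rcases abs_choice t with h | h <;> simp [h]

lemma le_sum_sin_sq_of_mul_le {m : ℕ} {t : ℝ} (ht : m * |t| ≤ π / 2) :
    4 / (3 * π ^ 2) * (m ^ 3 * t ^ 2) ≤ ∑ j ∈ Icc 1 m, sin (j * t) ^ 2 :=
  calc 4 / (3 * π ^ 2) * (m ^ 3 * t ^ 2)
      = (2 / π * t) ^ 2 * (m ^ 3 / 3) := by field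
    _ ≤ (2 / π * t) ^ 2 * ∑ j ∈ Icc 1 m, (j : ℝ) ^ 2 := by
      refine mul_le_mul_of_nonneg_left ?_ (sq_nonneg _)
      rw [sum_Icc_sq]
      nlinarith [sq_nonneg (m : ℝ), m.cast_nonneg (α := ℝ)]
    _ = ∑ j ∈ Icc 1 m, (2 / π * (j * |t|)) ^ 2 := by
      rw [mul_sum]
      refine sum_congr rfl fun j _ => ?_
      rw [mul_pow, mul_pow, mul_pow, sq_abs]
      ring
    _ ≤ ∑ j ∈ Icc 1 m, sin (j * |t|) ^ 2 := by
      refine sum_le_sum fun j hj => ?_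
      have hjm : (j : ℝ) ≤ m := Nat.cast_le.2 (mem_Icc.1 hj).2
      gcongr
      exact mul_le_sin (by positivity) (ht.trans' (by gcongr))
    _ = ∑ j ∈ Icc 1 m, sin (j * t) ^ 2 := by
      simp_rw [sin_mul_abs_sq]

lemma le_sum_sin_sq_of_le_mul {m : ℕ} {t : ℝ} (hmt : π / 2 ≤ m * |t|) (ht : |t| ≤ π / 2) :
    (m : ℝ) / 4 ≤ ∑ j ∈ Icc 1 m, sin (j * t) ^ 2 := by
  have one_le_mul_sin : 1 ≤ m * sin |t| :=
    calc (1 : ℝ) = 2 / π * (π / 2) := by field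
      _ ≤ 2 / π * (m * |t|) := by gcongr
      _ = m * (2 / π * |t|) := by ring
      _ ≤ m * sin |t| := by gcongr; exact mul_le_sin (abs_nonneg t) ht
  have sin_pos : 0 < sin |t| := pos_of_mul_pos_right (by linarith) m.cast_nonneg
  have := four_mul_sin_mul_sum_sin_sq m |t|
  have := sin_le_one ((2 * m + 1) * |t|)
  simp_rw [← sin_mul_abs_sq _ t]
  refine le_of_mul_le_mul_left ?_ (mul_pos four_pos sin_pos)
  nlinarith

lemma one_add_le_mul_exp_sum_sin_sq (m : ℕ) {t : ℝ} (ht : |t| ≤ π / 2) :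
    1 + m ^ 3 * t ^ 2 ≤ 12288 * exp ((∑ j ∈ Icc 1 m, sin (j * t) ^ 2) / 2) := by
  have pi_sq_le : π ^ 2 ≤ 10 := by nlinarith [pi_pos, pi_lt_d2]
  rcases le_total (m * |t|) (π / 2) with hmt | hmt
  · have hexp := add_one_le_exp ((∑ j ∈ Icc 1 m, sin (j * t) ^ 2) / 2)
    have hsum : 2 / 15 * (m ^ 3 * t ^ 2) ≤ ∑ j ∈ Icc 1 m, sin (j * t) ^ 2 := by
      refine (mul_le_mul_of_nonneg_right ?_ (by positivity)).trans (le_sum_sin_sq_of_mul_le hmt)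
      rw [div_le_div_iff₀ (by positivity) (by positivity)]
      linarith
    linarith [show 0 ≤ m ^ 3 * t ^ 2 by positivity]
  · have hm : 1 ≤ (m : ℝ) := by
      rw [Nat.one_le_cast, Nat.one_le_iff_ne_zero]
      rintro rfl
      rw [Nat.cast_zero, zero_mul] at hmt
      linarith [pi_pos]
    have t_sq_le : t ^ 2 ≤ 3 := by
      rw [← sq_abs]
      nlinarith [abs_nonneg t]
    -- This case determines the constant: `12288 = 4 * (3! * 8 ^ 3)`.
    calc 1 + m ^ 3 * t ^ 2
        ≤ m ^ 3 + m ^ 3 * 3 := by gcongr; exact one_le_pow₀ hm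
      _ = 12288 * ((m / 8 : ℝ) ^ 3 / Nat.factorial 3) := by norm_num [Nat.factorial]; ring
      _ ≤ 12288 * exp (m / 8) := by
        gcongr
        exact pow_div_factorial_le_exp _ (by positivity) 3
      _ ≤ 12288 * exp ((∑ j ∈ Icc 1 m, sin (j * t) ^ 2) / 2) := by
        refine mul_le_mul_of_nonneg_left (exp_le_exp.2 ?_) (by norm_num)
        linarith [le_sum_sin_sq_of_le_mul hmt ht]

/-- The characteristic function `∏_{j=1}^m cos (j t)` of the signed sum `∑_{j=1}^m ± j` with
independent fair signs, which is `m(m+1)/2` minus twice the sum of a random subset. -/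
noncomputable def cosProd (m : ℕ) (t : ℝ) : ℝ := ∏ j ∈ Icc 1 m, cos (j * t)

lemma continuous_cosProd (m : ℕ) : Continuous (cosProd m) := by
  unfold cosProd
  fun_prop

lemma abs_cosProd_le (m : ℕ) {t : ℝ} (ht : |t| ≤ π / 2) :
    |cosProd m t| ≤ 12288 * (1 + m ^ 3 * t ^ 2)⁻¹ := by
  refine (abs_prod_cos_le_exp_neg_sum_sin_sq _ _).trans ?_
  rw [exp_neg, ← div_eq_mul_inv, inv_eq_one_div, div_le_div_iff₀ (exp_pos _) (by positivity),
    one_mul]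
  exact one_add_le_mul_exp_sum_sin_sq m ht

lemma tendsto_rpow_three_halves :
    Tendsto (fun m : ℕ => (m : ℝ) ^ ((3 : ℝ) / 2)) atTop atTop :=
  (tendsto_rpow_atTop (by norm_num)).comp tendsto_natCast_atTop_atTop

lemma div_rpow_three_halves_sq (s : ℝ) (m : ℕ) :
    (s / (m : ℝ) ^ ((3 : ℝ) / 2)) ^ 2 = s ^ 2 / m ^ 3 := by
  rw [div_pow, ← rpow_mul_natCast m.cast_nonneg, ← rpow_natCast (m : ℝ) 3]
  norm_num

lemma tendsto_sum_mul_div_rpow_sq (s : ℝ) :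
    Tendsto (fun m : ℕ => ∑ j ∈ Icc 1 m, (j * (s / (m : ℝ) ^ ((3 : ℝ) / 2))) ^ 2) atTop
      (𝓝 (s ^ 2 / 3)) := by
  have inv_tendsto : Tendsto (fun m : ℕ => (m : ℝ)⁻¹) atTop (𝓝 0) :=
    tendsto_inv_atTop_nhds_zero_nat
  have h_lim : Tendsto (fun m : ℕ => s ^ 2 * ((1 + (m : ℝ)⁻¹) * (2 + (m : ℝ)⁻¹) / 6)) atTop
      (𝓝 (s ^ 2 * ((1 + 0) * (2 + 0) / 6))) :=
    (((inv_tendsto.const_add 1).mul (inv_tendsto.const_add 2)).div_const 6).const_mul _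
  convert h_lim.congr' ?_ using 2
  · ring
  · filter_upwards [eventually_ne_atTop 0] with m hm
    simp_rw [mul_pow, ← sum_mul, sum_Icc_sq, div_rpow_three_halves_sq]
    field

lemma tendsto_sum_mul_div_rpow_pow_four (s : ℝ) :
    Tendsto (fun m : ℕ => ∑ j ∈ Icc 1 m, (j * (s / (m : ℝ) ^ ((3 : ℝ) / 2))) ^ 4) atTop
      (𝓝 0) := by
  have h_lim : Tendsto (fun m : ℕ => s ^ 4 * (m : ℝ)⁻¹) atTop (𝓝 0) := by
    simpa using tendsto_inv_atTop_nhds_zero_nat.const_mul (s ^ 4)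
  refine squeeze_zero' (.of_forall fun m => by positivity) ?_ h_lim
  filter_upwards [eventually_ne_atTop 0] with m hm
  calc ∑ j ∈ Icc 1 m, (j * (s / (m : ℝ) ^ ((3 : ℝ) / 2))) ^ 4
      = ∑ j ∈ Icc 1 m, (j : ℝ) ^ 4 * (s ^ 2 / m ^ 3) ^ 2 := by
        simp_rw [← div_rpow_three_halves_sq, mul_pow, ← pow_mul]
    _ ≤ ∑ j ∈ Icc 1 m, (m : ℝ) ^ 4 * (s ^ 2 / m ^ 3) ^ 2 := by
        gcongr with j hj
        exact (mem_Icc.1 hj).2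
    _ = s ^ 4 * (m : ℝ)⁻¹ := by
        rw [sum_const, Nat.card_Icc, nsmul_eq_mul, Nat.add_sub_cancel]
        field

lemma tendsto_cosProd_div_rpow (s : ℝ) :
    Tendsto (fun m : ℕ => cosProd m (s / m ^ ((3 : ℝ) / 2))) atTop
      (𝓝 (exp (-(1 / 6) * s ^ 2))) := by
  convert! tendsto_prod_cos (tendsto_sum_mul_div_rpow_sq s) (tendsto_sum_mul_div_rpow_pow_four s)
    using 3
  ring

lemma tendsto_integral_cosProd_mul_cos {d : ℕ → ℝ} {y : ℝ}
    (hd : Tendsto (fun m : ℕ => d m / m ^ ((3 : ℝ) / 2)) atTop (𝓝 y)) :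
    Tendsto (fun m : ℕ => ∫ s in -(π / 2 * m ^ ((3 : ℝ) / 2))..π / 2 * m ^ ((3 : ℝ) / 2),
        cosProd m (s / m ^ ((3 : ℝ) / 2)) * cos (d m * (s / m ^ ((3 : ℝ) / 2)))) atTop
      (𝓝 (∫ s : ℝ, exp (-(1 / 6) * s ^ 2) * cos (y * s))) := by
  refine tendsto_intervalIntegral_of_dominated (fun s => 12288 * (1 + s ^ 2)⁻¹)
    (tendsto_rpow_three_halves.const_mul_atTop (by positivity)) ?_ ?_
    (integrable_inv_one_add_sq.const_mul _) (.of_forall fun s => ?_)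
  · have := continuous_cosProd
    exact .of_forall fun m => Continuous.aestronglyMeasurable (by fun_prop)
  · filter_upwards [eventually_gt_atTop 0] with m hm
    refine .of_forall fun s hs => ?_
    have hc : 0 < (m : ℝ) ^ ((3 : ℝ) / 2) := by positivity
    have ht : |s / m ^ ((3 : ℝ) / 2)| ≤ π / 2 := by
      rwa [abs_div, abs_of_pos hc, div_le_iff₀ hc]
    have s_sq : m ^ 3 * (s / m ^ ((3 : ℝ) / 2)) ^ 2 = s ^ 2 := by
      rw [div_rpow_three_halves_sq]
      field
    rw [norm_mul, ← s_sq]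
    exact (mul_le_of_le_one_right (norm_nonneg _) (abs_cos_le_one _)).trans (abs_cosProd_le m ht)
  · refine (tendsto_cosProd_div_rpow s).mul ((continuous_cos.tendsto _).comp ?_)
    simpa only [div_mul_eq_mul_div, mul_div_assoc] using hd.mul_const s

theorem card_filter_sum_id_mul_div_two_pow (m n : ℕ) {c : ℝ} (hc : c ≠ 0) :
    #{S ∈ (Icc 1 m).powerset | S.sum id = n} * c / 2 ^ m =
      π⁻¹ * ∫ s in -(π / 2 * c)..π / 2 * c,
        cosProd m (s / c) * cos ((2 * n - m * (m + 1) / 2) * (s / c)) := by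
  have h_filter : {S ∈ (Icc 1 m).powerset | S.sum id = n} =
      (Icc 1 m).powerset.filter fun S : Finset ℕ => ∑ j ∈ S, (j : ℤ) = n := by
    refine filter_congr fun S _ => ?_
    rw [← Nat.cast_sum, Nat.cast_inj]
    rfl
  have h_fourier := card_filter_sum_eq_mul_pi (Icc 1 m) (fun j => (j : ℤ)) n
  simp only [Int.cast_natCast, sum_Icc_id, Nat.card_Icc, Nat.add_sub_cancel] at h_fourier
  rw [intervalIntegral.integral_comp_div
    (fun t => cosProd m t * cos ((2 * n - m * (m + 1) / 2) * t)) hc, smul_eq_mul, ← neg_mul,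
    mul_div_cancel_right₀ _ hc, mul_div_cancel_right₀ _ hc, h_filter,
    eq_div_of_mul_eq pi_ne_zero h_fourier]
  simp only [cosProd]
  field

lemma tendsto_middle_sub_div_rpow :
    Tendsto (fun m : ℕ => ((m * (m + 1) / 4 : ℕ) - m * (m + 1) / 4) / (m : ℝ) ^ ((3 : ℝ) / 2))
      atTop (𝓝 0) := by
  have abs_sub_le (k : ℕ) : |((k / 4 : ℕ) : ℝ) - k / 4| ≤ 1 := by
    have := Nat.cast_div_le (α := ℝ) (m := k) (n := 4)
    have : (k : ℝ) ≤ 4 * (k / 4 : ℕ) + 4 := by norm_cast; lia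
    push_cast at *
    rw [abs_le]
    constructor <;> linarith
  refine squeeze_zero_norm (fun m => ?_) tendsto_rpow_three_halves.inv_tendsto_atTop
  rw [norm_div, norm_of_nonneg (by positivity : 0 ≤ (m : ℝ) ^ ((3 : ℝ) / 2)), Pi.inv_apply,
    inv_eq_one_div]
  gcongr
  exact_mod_cast abs_sub_le (m * (m + 1))

end SubsetSum

open Filter Finset Real Topology in
/-- The local limit theorem for subset sums, which have mean `m(m+1)/4` and variance asymptotic to
`m³/12`; the middle rank is the case `x = 0`. -/
theorem middle_rank_asymptotics_general {n : ℕ → ℕ} {x : ℝ}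
    (hn : Tendsto (fun m : ℕ => (n m - m * (m + 1) / 4) / (m : ℝ) ^ ((3 : ℝ) / 2)) atTop (𝓝 x)) :
    Tendsto
      (fun m : ℕ =>
        #{S ∈ (Icc 1 m).powerset | S.sum id = n m} * (m : ℝ) ^ ((3 : ℝ) / 2) / 2 ^ m)
      atTop (𝓝 (√(6 / π) * exp (-6 * x ^ 2))) := by
  have hd : Tendsto (fun m : ℕ => (2 * n m - m * (m + 1) / 2) / (m : ℝ) ^ ((3 : ℝ) / 2)) atTop
      (𝓝 (2 * x)) := (hn.const_mul 2).congr fun m => by ring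
  have h_const : √(π / (1 / 6)) = π * √(6 / π) := by
    rw [← sqrt_sq pi_pos.le, ← sqrt_mul (sq_nonneg π), sqrt_sq pi_pos.le]
    congr 1
    field
  have h_lim := (SubsetSum.tendsto_integral_cosProd_mul_cos hd).const_mul π⁻¹
  rw [SubsetSum.integral_exp_neg_mul_sq_mul_cos (by norm_num), h_const, mul_assoc,
    inv_mul_cancel_left₀ pi_ne_zero] at h_lim
  convert h_lim.congr' ?_ using 4
  · ring
  · filter_upwards [eventually_ne_atTop 0] with m hm
    exact (SubsetSum.card_filter_sum_id_mul_div_two_pow m (n m) (by positivity)).symm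

/-- asymptotics of the middle rank. If `A(m)` is the number of
subsets of `{1,…,m}` with element sum `⌊m(m+1)/4⌋`, then
`A(m) · m^{3/2} / 2^m → √(6/π)` as `m → ∞`. -/
theorem middle_rank_asymptotics :
    Filter.Tendsto
      (fun m : ℕ =>
        ((((Finset.Icc 1 m).powerset.filter
            fun S => S.sum id = m * (m + 1) / 4).card : ℝ) *
          (m : ℝ) ^ ((3 : ℝ) / 2)) / 2 ^ m)
      Filter.atTop (nhds (Real.sqrt (6 / Real.pi))) := by
  simpa using middle_rank_asymptotics_general SubsetSum.tendsto_middle_sub_div_rpow
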